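/- Structurality of the RNmatrix consequence relation for K: for every substitution ρ, every set of formulas Γ and every formula A, if every valuation v ∈ F_K designating all of Γ designates A, then every valuation v ∈ F_K designating all of { ρ(B) : B ∈ Γ } designates ρ(A). -/

import Mathlib

/-- Formulas of the modal language: propositional variables, negation,
the modality ⊖ (here `box`), and implication. -/
inductive Form : Type
  | var : ℕ → Form
  | neg : Form → Form
  | box : Form → Form
  | imp : Form → Form → Form

/-- A valuation `v = (v1, v2)` over the 4-valued Nmatrix for the minimal modal
logic M: `v1` behaves classically on ¬ and →, and `v1(⊖A) = v2(A)`;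
`v2` is otherwise unconstrained. -/
structure Val where
  v1 : Form → Fin 2
  v2 : Form → Fin 2
  neg_eq : ∀ A, v1 (Form.neg A) = 1 - v1 A
  imp_eq : ∀ A B, v1 (Form.imp A B) = max (1 - v1 A) (v1 B)
  box_eq : ∀ A, v1 (Form.box A) = v2 A

/-- The restriction defining F_K: valuations satisfying the (K) condition. -/
def FK (v : Val) : Prop :=
  ∀ A B : Form, v.v2 (A.imp B) ≤ max (1 - v.v2 A) (v.v2 B)

/-- A substitution: the endomorphism of the formula algebra determined by a
map from propositional variables to formulas. -/
def subst (ρ : ℕ → Form) : Form → Form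
  | .var n => ρ n
  | .neg A => .neg (subst ρ A)
  | .box A => .box (subst ρ A)
  | .imp A B => .imp (subst ρ A) (subst ρ B)

/-- Structurality of the RNmatrix consequence relation for K. -/
theorem RMK_consequence_structural (ρ : ℕ → Form) (Γ : Set Form) (A : Form)
    (h : ∀ v : Val, FK v → (∀ B ∈ Γ, v.v1 B = 1) → v.v1 A = 1) :
    ∀ v : Val, FK v → (∀ B ∈ Γ, v.v1 (subst ρ B) = 1) →
      v.v1 (subst ρ A) = 1 := by
  intro v hv hΓ
  exact h ⟨fun B => v.v1 (subst ρ B), fun B => v.v2 (subst ρ B),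
    fun B => v.neg_eq (subst ρ B), fun B C => v.imp_eq (subst ρ B) (subst ρ C),
    fun B => v.box_eq (subst ρ B)⟩ (fun B C => hv (subst ρ B) (subst ρ C)) hΓ
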